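/- arXiv:2001.00514 — 2 statements merged into one kernel-verified Lean document; each statement's English description precedes it below -/
import Mathlib

section
/- McCormick's concave envelope theorem for a bilinear term: let ℓ₁ ≤ u₁ and ℓ₂ ≤ u₂ be real numbers and let R = [ℓ₁,u₁] × [ℓ₂,u₂] ⊆ ℝ². Define g(x₁,x₂) = min(u₂x₁ + ℓ₁x₂ − ℓ₁u₂, ℓ₂x₁ + u₁x₂ − u₁ℓ₂). Then g is concave on R, g(x₁,x₂) ≥ x₁·x₂ for all (x₁,x₂) ∈ R, and for every function h : ℝ² → ℝ that is concave on R and satisfies h(x₁,x₂) ≥ x₁·x₂ for all (x₁,x₂) ∈ R, one has h(x₁,x₂) ≥ g(x₁,x₂) for all (x₁,x₂) ∈ R; that is, g is the concave envelope of the bilinear function (x₁,x₂) ↦ x₁·x₂ on R. -/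
/-!
The two over-estimators are the tangent planes of `(x, y) ↦ x * y` at the vertices `(l₁, u₂)` and
`(u₁, l₂)`. The product minus its tangent plane at `(a, b)` is `(x - a) * (y - b)`, which for these
two vertices is nonpositive on the box, and which vanishes on the lines `x = a` and `y = b`.
The diagonal from `(l₁, l₂)` to `(u₁, u₂)` cuts the box into two triangles. Each has all its
vertices on the two lines through one of the off-diagonal corners, so a concave function that is
at least the product at the vertices dominates the tangent plane at that corner on the triangle.
-/

open Set

theorem pair_subset_Icc {α : Type*} [Preorder α] {a b : α} (hab : a ≤ b) : {a, b} ⊆ Icc a b :=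
  pair_subset (left_mem_Icc.2 hab) (right_mem_Icc.2 hab)

section ConvexHull

variable {𝕜 E F β : Type*}

theorem le_of_mem_convexHull_of_convexOn_of_concaveOn [Semiring 𝕜] [PartialOrder 𝕜]
    [AddCommMonoid E] [Module 𝕜 E] [AddCommGroup β] [PartialOrder β] [IsOrderedAddMonoid β]
    [Module 𝕜 β] [PosSMulMono 𝕜 β] {s : Set E} {f h : E → β}
    (hf : ConvexOn 𝕜 (convexHull 𝕜 s) f) (hh : ConcaveOn 𝕜 (convexHull 𝕜 s) h)
    (hle : ∀ x ∈ s, f x ≤ h x) {x : E} (hx : x ∈ convexHull 𝕜 s) : f x ≤ h x := by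
  have hconvex : Convex 𝕜 {y ∈ convexHull 𝕜 s | (f - h) y ≤ 0} := (hf.sub hh).convex_le 0
  have hsub : s ⊆ {y ∈ convexHull 𝕜 s | (f - h) y ≤ 0} := fun y hy =>
    ⟨subset_convexHull 𝕜 s hy, sub_nonpos.2 (hle y hy)⟩
  exact sub_nonpos.1 (convexHull_min hsub hconvex hx).2

variable [Field 𝕜] [LinearOrder 𝕜] [IsStrictOrderedRing 𝕜]
variable [AddCommGroup E] [Module 𝕜 E] [AddCommGroup F] [Module 𝕜 F]

theorem smul_add_smul_add_smul_mem_convexHull {x y z : E} {a b c : 𝕜} (ha : 0 ≤ a) (hb : 0 ≤ b)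
    (hc : 0 ≤ c) (habc : a + b + c = 1) :
    a • x + b • y + c • z ∈ convexHull 𝕜 {x, y, z} := by
  refine mem_convexHull_of_exists_fintype ![a, b, c] ![x, y, z] ?_ ?_ ?_ ?_
  · simp [Fin.forall_fin_succ, ha, hb, hc]
  · simpa [Fin.sum_univ_three] using habc
  · simp [Fin.forall_fin_succ]
  · simp [Fin.sum_univ_three]

theorem segment_prod_segment_subset_union_convexHull (a b : E) (c d : F) :
    segment 𝕜 a b ×ˢ segment 𝕜 c d ⊆
      convexHull 𝕜 {(a, c), (a, d), (b, d)} ∪ convexHull 𝕜 {(a, c), (b, c), (b, d)} := by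
  rw [segment_eq_image, segment_eq_image]
  rintro ⟨_, _⟩ ⟨⟨s, ⟨hs₀, hs₁⟩, rfl⟩, ⟨t, ⟨ht₀, ht₁⟩, rfl⟩⟩
  rcases le_total s t with hst | hts
  · left
    convert smul_add_smul_add_smul_mem_convexHull (x := (a, c)) (y := (a, d)) (z := (b, d))
      (sub_nonneg.2 ht₁) (sub_nonneg.2 hst) hs₀ (by ring) using 1
    ext <;> simp only [Prod.fst_add, Prod.snd_add, Prod.smul_fst, Prod.smul_snd] <;> module
  · right
    convert smul_add_smul_add_smul_mem_convexHull (x := (a, c)) (y := (b, c)) (z := (b, d))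
      (sub_nonneg.2 hs₁) (sub_nonneg.2 hts) ht₀ (by ring) using 1
    ext <;> simp only [Prod.fst_add, Prod.snd_add, Prod.smul_fst, Prod.smul_snd] <;> module

end ConvexHull

/-- The tangent plane of `(x, y) ↦ x * y` at `(a, b)`, as a function on the plane. McCormick's
over-estimators on `[l₁, u₁] × [l₂, u₂]` are `mulTangent l₁ u₂` and `mulTangent u₁ l₂`. -/
def mulTangent {R : Type*} [CommRing R] (a b : R) (p : R × R) : R :=
  b * p.1 + a * p.2 - a * b

section MulTangent

variable {R : Type*} [CommRing R]

theorem mul_sub_mulTangent (a b : R) (p : R × R) :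
    p.1 * p.2 - mulTangent a b p = (p.1 - a) * (p.2 - b) := by
  unfold mulTangent
  ring

theorem mulTangent_eq_mul {a b : R} {p : R × R} (hp : p.1 = a ∨ p.2 = b) :
    mulTangent a b p = p.1 * p.2 := by
  refine (sub_eq_zero.1 ?_).symm
  rw [mul_sub_mulTangent]
  rcases hp with h | h <;> simp [h]

theorem mulTangent_smul_add_smul (a b : R) (p q : R × R) {s t : R} (hst : s + t = 1) :
    mulTangent a b (s • p + t • q) = s • mulTangent a b p + t • mulTangent a b q := by
  simp only [mulTangent, Prod.fst_add, Prod.snd_add, Prod.smul_fst, Prod.smul_snd, smul_eq_mul]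
  linear_combination a * b * hst

theorem convexOn_mulTangent [PartialOrder R] {C : Set (R × R)} (hC : Convex R C) (a b : R) :
    ConvexOn R C (mulTangent a b) :=
  ⟨hC, fun p _ q _ _ _ _ _ hst => (mulTangent_smul_add_smul a b p q hst).le⟩

theorem concaveOn_mulTangent [PartialOrder R] {C : Set (R × R)} (hC : Convex R C) (a b : R) :
    ConcaveOn R C (mulTangent a b) :=
  ⟨hC, fun p _ q _ _ _ _ _ hst => (mulTangent_smul_add_smul a b p q hst).ge⟩

theorem mul_le_min_mulTangent [LinearOrder R] [IsOrderedRing R] {l₁ u₁ l₂ u₂ : R} {p : R × R}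
    (hp : p ∈ Icc l₁ u₁ ×ˢ Icc l₂ u₂) :
    p.1 * p.2 ≤ min (mulTangent l₁ u₂ p) (mulTangent u₁ l₂ p) := by
  obtain ⟨⟨hl₁, hu₁⟩, hl₂, hu₂⟩ := hp
  refine le_min (sub_nonpos.1 ?_) (sub_nonpos.1 ?_) <;> rw [mul_sub_mulTangent]
  · exact mul_nonpos_of_nonneg_of_nonpos (sub_nonneg.2 hl₁) (sub_nonpos.2 hu₂)
  · exact mul_nonpos_of_nonpos_of_nonneg (sub_nonpos.2 hu₁) (sub_nonneg.2 hl₂)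

theorem mulTangent_le_of_mem_convexHull [PartialOrder R] [IsOrderedRing R] {a b : R}
    {s : Set (R × R)} {h : R × R → R} (hs : ∀ p ∈ s, p.1 = a ∨ p.2 = b)
    (hh : ConcaveOn R (convexHull R s) h) (hle : ∀ p ∈ s, p.1 * p.2 ≤ h p) {p : R × R}
    (hp : p ∈ convexHull R s) : mulTangent a b p ≤ h p :=
  le_of_mem_convexHull_of_convexOn_of_concaveOn
    (convexOn_mulTangent (convex_convexHull R s) a b) hh
    (fun q hq => (mulTangent_eq_mul (hs q hq)).trans_le (hle q hq)) hp

end MulTangent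

section Envelope

variable {𝕜 : Type*} [Field 𝕜] [LinearOrder 𝕜] [IsStrictOrderedRing 𝕜]

theorem min_mulTangent_le_of_concaveOn {l₁ u₁ l₂ u₂ : 𝕜} {h : 𝕜 × 𝕜 → 𝕜}
    (hh : ConcaveOn 𝕜 (Icc l₁ u₁ ×ˢ Icc l₂ u₂) h)
    (hle : ∀ p ∈ ({l₁, u₁} ×ˢ {l₂, u₂} : Set (𝕜 × 𝕜)), p.1 * p.2 ≤ h p) {p : 𝕜 × 𝕜}
    (hp : p ∈ Icc l₁ u₁ ×ˢ Icc l₂ u₂) :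
    min (mulTangent l₁ u₂ p) (mulTangent u₁ l₂ p) ≤ h p := by
  have h₁ : l₁ ≤ u₁ := hp.1.1.trans hp.1.2
  have h₂ : l₂ ≤ u₂ := hp.2.1.trans hp.2.2
  have concaveOn_hull {s : Set (𝕜 × 𝕜)} (hs : s ⊆ {l₁, u₁} ×ˢ {l₂, u₂}) :
      ConcaveOn 𝕜 (convexHull 𝕜 s) h :=
    hh.subset (convexHull_min
      (hs.trans (prod_mono (pair_subset_Icc h₁) (pair_subset_Icc h₂))) hh.1) (convex_convexHull 𝕜 s)
  have upper_vertices : {(l₁, l₂), (l₁, u₂), (u₁, u₂)} ⊆ ({l₁, u₁} ×ˢ {l₂, u₂} : Set (𝕜 × 𝕜)) := by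
    simp [insert_subset_iff]
  have lower_vertices : {(l₁, l₂), (u₁, l₂), (u₁, u₂)} ⊆ ({l₁, u₁} ×ˢ {l₂, u₂} : Set (𝕜 × 𝕜)) := by
    simp [insert_subset_iff]
  rw [← segment_eq_Icc h₁, ← segment_eq_Icc h₂] at hp
  rcases segment_prod_segment_subset_union_convexHull _ _ _ _ hp with hupper | hlower
  · exact min_le_of_left_le <| mulTangent_le_of_mem_convexHull (by simp)
      (concaveOn_hull upper_vertices) (fun q hq => hle q (upper_vertices hq)) hupper
  · exact min_le_of_right_le <| mulTangent_le_of_mem_convexHull (by simp)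
      (concaveOn_hull lower_vertices) (fun q hq => hle q (lower_vertices hq)) hlower

theorem mccormick_concave_envelope_general (l₁ u₁ l₂ u₂ : 𝕜) :
    ConcaveOn 𝕜 (Icc l₁ u₁ ×ˢ Icc l₂ u₂)
      (fun p => min (mulTangent l₁ u₂ p) (mulTangent u₁ l₂ p)) ∧
    (∀ p ∈ Icc l₁ u₁ ×ˢ Icc l₂ u₂,
      p.1 * p.2 ≤ min (mulTangent l₁ u₂ p) (mulTangent u₁ l₂ p)) ∧
    (∀ h : 𝕜 × 𝕜 → 𝕜, ConcaveOn 𝕜 (Icc l₁ u₁ ×ˢ Icc l₂ u₂) h →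
      (∀ p ∈ ({l₁, u₁} ×ˢ {l₂, u₂} : Set (𝕜 × 𝕜)), p.1 * p.2 ≤ h p) →
      ∀ p ∈ Icc l₁ u₁ ×ˢ Icc l₂ u₂, min (mulTangent l₁ u₂ p) (mulTangent u₁ l₂ p) ≤ h p) := by
  have hbox : Convex 𝕜 (Icc l₁ u₁ ×ˢ Icc l₂ u₂) := (convex_Icc l₁ u₁).prod (convex_Icc l₂ u₂)
  exact ⟨(concaveOn_mulTangent hbox l₁ u₂).inf (concaveOn_mulTangent hbox u₁ l₂),
    fun _ => mul_le_min_mulTangent, fun _ hh hle _ => min_mulTangent_le_of_concaveOn hh hle⟩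

end Envelope

/-- McCormick's concave envelope theorem for a bilinear term: the pointwise minimum of the
two over-estimators is the concave envelope of `(x₁, x₂) ↦ x₁ * x₂` on the box
`[l₁, u₁] × [l₂, u₂]`. -/
theorem mccormick_concave_envelope (l₁ u₁ l₂ u₂ : ℝ) (h₁ : l₁ ≤ u₁) (h₂ : l₂ ≤ u₂) :
    ConcaveOn ℝ (Set.Icc l₁ u₁ ×ˢ Set.Icc l₂ u₂)
      (fun p : ℝ × ℝ =>
        min (u₂ * p.1 + l₁ * p.2 - l₁ * u₂) (l₂ * p.1 + u₁ * p.2 - u₁ * l₂)) ∧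
    (∀ p ∈ Set.Icc l₁ u₁ ×ˢ Set.Icc l₂ u₂,
      p.1 * p.2 ≤ min (u₂ * p.1 + l₁ * p.2 - l₁ * u₂) (l₂ * p.1 + u₁ * p.2 - u₁ * l₂)) ∧
    (∀ h : ℝ × ℝ → ℝ, ConcaveOn ℝ (Set.Icc l₁ u₁ ×ˢ Set.Icc l₂ u₂) h →
      (∀ p ∈ Set.Icc l₁ u₁ ×ˢ Set.Icc l₂ u₂, p.1 * p.2 ≤ h p) →
      ∀ p ∈ Set.Icc l₁ u₁ ×ˢ Set.Icc l₂ u₂,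
        min (u₂ * p.1 + l₁ * p.2 - l₁ * u₂) (l₂ * p.1 + u₁ * p.2 - u₁ * l₂) ≤ h p) := by
  obtain ⟨hconcave, hmajorant, hleast⟩ := mccormick_concave_envelope_general l₁ u₁ l₂ u₂
  exact ⟨hconcave, hmajorant, fun h hh hle => hleast h hh fun p hp =>
    hle p (prod_mono (pair_subset_Icc h₁) (pair_subset_Icc h₂) hp)⟩
end

section
/- The lifted grid points of any discretization span the same convex hull as the graph of the multilinear term: let n ≥ 1 and ℓ, u : Fin n → ℝ with ℓ i ≤ u i for all i, let φ(x) = ∏ᵢ xᵢ, and for each i let Sᵢ be a finite subset of the interval [ℓ i, u i] containing both ℓ i and u i. Let S = ∏ᵢ Sᵢ be the finite grid of discretization points. Then the convex hull (over ℝ) of the finite set {(v, φ(v)) : v ∈ S} equals the convex hull of X = {(x, φ(x)) : ℓ i ≤ x i ≤ u i for all i}. -/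
/-!
Moving one coordinate while freezing the others turns a multiaffine map into an affine one, and
preimages of convex sets under affine maps are convex. Hence a convex set that contains the image of
a product `∏ Sᵢ` still contains it after one factor is replaced by its convex hull, and so, one
factor at a time, after all of them are. Apply this to the multiaffine map `x ↦ (x, φ x)`: the
convex hull of a discretization of an interval is the whole interval.
-/

open Function Set

section Multiaffine

variable {𝕜 ι F G : Type*} {E : ι → Type*} [DecidableEq ι] [Semiring 𝕜]
  [∀ i, AddCommMonoid (E i)] [∀ i, Module 𝕜 (E i)]
  [AddCommMonoid F] [Module 𝕜 F] [AddCommMonoid G] [Module 𝕜 G]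

variable (𝕜) in
/-- A map on a product of modules is multiaffine if it is affine in each coordinate when the others
are held fixed. Affinity is expressed by preservation of combinations `a • y + b • z` with
`a + b = 1`, which makes sense without subtraction. -/
def IsMultiaffine (f : (∀ i, E i) → F) : Prop :=
  ∀ (x : ∀ i, E i) (i : ι) (y z : E i) (a b : 𝕜), a + b = 1 →
    f (update x i (a • y + b • z)) = a • f (update x i y) + b • f (update x i z)

namespace IsMultiaffine

theorem of_multilinearMap (f : MultilinearMap 𝕜 E F) : IsMultiaffine 𝕜 f := by
  intro x i y z a b _
  simp only [MultilinearMap.map_update_add, MultilinearMap.map_update_smul]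

protected theorem id : IsMultiaffine 𝕜 (id : (∀ i, E i) → ∀ i, E i) := by
  intro x i y z a b hab
  ext j
  obtain rfl | hji := eq_or_ne j i
  · simp
  · simp [hji, ← add_smul, hab]

theorem prodMk {f : (∀ i, E i) → F} {g : (∀ i, E i) → G}
    (hf : IsMultiaffine 𝕜 f) (hg : IsMultiaffine 𝕜 g) :
    IsMultiaffine 𝕜 fun x ↦ (f x, g x) :=
  fun x i y z a b hab ↦ Prod.ext (hf x i y z a b hab) (hg x i y z a b hab)

variable [PartialOrder 𝕜] {f : (∀ i, E i) → F} {C : Set F}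

theorem convex_preimage_update (hf : IsMultiaffine 𝕜 f) (hC : Convex 𝕜 C) (x : ∀ i, E i) (i : ι) :
    Convex 𝕜 {y | f (update x i y) ∈ C} := by
  intro y hy z hz a b ha hb hab
  rw [mem_ofPred_eq, hf x i y z a b hab]
  exact hC hy hz ha hb hab

theorem mapsTo_pi_update_convexHull (hf : IsMultiaffine 𝕜 f) (hC : Convex 𝕜 C)
    {S : ∀ i, Set (E i)} (hS : MapsTo f (univ.pi S) C) (i : ι) :
    MapsTo f (univ.pi (update S i (convexHull 𝕜 (S i)))) C := by
  intro x hx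
  have hxi : x i ∈ convexHull 𝕜 (S i) := by simpa using hx i (mem_univ i)
  have hSi : S i ⊆ {y | f (update x i y) ∈ C} := by
    intro y hy
    refine hS fun j _ ↦ ?_
    obtain rfl | hji := eq_or_ne j i
    · simpa using hy
    · simpa [hji] using hx j (mem_univ j)
  simpa using convexHull_min hSi (hf.convex_preimage_update hC x i) hxi

theorem mapsTo_pi_convexHull [Finite ι] (hf : IsMultiaffine 𝕜 f) (hC : Convex 𝕜 C)
    {S : ∀ i, Set (E i)} (hS : MapsTo f (univ.pi S) C) :
    MapsTo f (univ.pi fun i ↦ convexHull 𝕜 (S i)) C := by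
  cases nonempty_fintype ι
  suffices h : ∀ T : Finset ι, MapsTo f (univ.pi (T.piecewise (fun i ↦ convexHull 𝕜 (S i)) S)) C by
    simpa only [Finset.piecewise_univ] using h Finset.univ
  intro T
  induction T using Finset.induction_on with
  | empty => simpa only [Finset.piecewise_empty] using hS
  | insert j T hj ih =>
    rw [Finset.piecewise_insert]
    simpa only [Finset.piecewise_eq_of_notMem _ _ _ hj] using
      hf.mapsTo_pi_update_convexHull hC ih j

theorem convexHull_image_pi_convexHull [Finite ι] (hf : IsMultiaffine 𝕜 f) (S : ∀ i, Set (E i)) :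
    convexHull 𝕜 (f '' univ.pi fun i ↦ convexHull 𝕜 (S i)) = convexHull 𝕜 (f '' univ.pi S) := by
  apply Subset.antisymm
  · refine convexHull_min (image_subset_iff.2 ?_) (convex_convexHull 𝕜 _)
    exact hf.mapsTo_pi_convexHull (convex_convexHull 𝕜 _) fun x hx ↦
      subset_convexHull 𝕜 _ (mem_image_of_mem f hx)
  · gcongr
    exact subset_convexHull 𝕜 _

end IsMultiaffine

theorem convexHull_lifted_grid_eq_convexHull_graph_general [PartialOrder 𝕜] [Finite ι]
    {f : (∀ i, E i) → F} (hf : IsMultiaffine 𝕜 f) (S : ∀ i, Set (E i)) :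
    convexHull 𝕜 ((univ.pi S).graphOn f) =
      convexHull 𝕜 ((univ.pi fun i ↦ convexHull 𝕜 (S i)).graphOn f) :=
  ((IsMultiaffine.id.prodMk hf).convexHull_image_pi_convexHull S).symm

end Multiaffine

theorem convexHull_eq_Icc_of_isLeast_of_isGreatest {𝕜 : Type*} [Field 𝕜] [LinearOrder 𝕜]
    [IsStrictOrderedRing 𝕜] {s : Set 𝕜} {a b : 𝕜} (ha : IsLeast s a) (hb : IsGreatest s b) :
    convexHull 𝕜 s = Icc a b := by
  apply Subset.antisymm
  · exact convexHull_min (fun x hx ↦ ⟨ha.2 hx, hb.2 hx⟩) (convex_Icc a b)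
  · rw [← segment_eq_Icc (ha.2 hb.1)]
    exact segment_subset_convexHull ha.1 hb.1

/-- The lifted grid points of any discretization of the box span the same convex hull as
the graph of the multilinear term over the box. -/
theorem convexHull_lifted_grid_eq_convexHull_graph
    (n : ℕ) (hn : 1 ≤ n) (l u : Fin n → ℝ) (hlu : ∀ i, l i ≤ u i)
    (S : Fin n → Finset ℝ)
    (hS : ∀ i, ∀ r ∈ S i, l i ≤ r ∧ r ≤ u i)
    (hSl : ∀ i, l i ∈ S i) (hSu : ∀ i, u i ∈ S i) :
    convexHull ℝ {p : (Fin n → ℝ) × ℝ |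
        ∃ v : Fin n → ℝ, (∀ i, v i ∈ S i) ∧ p = (v, ∏ i, v i)} =
    convexHull ℝ {p : (Fin n → ℝ) × ℝ |
        ∃ x : Fin n → ℝ, (∀ i, l i ≤ x i ∧ x i ≤ u i) ∧ p = (x, ∏ i, x i)} := by
  have hull (i : Fin n) : convexHull ℝ (S i : Set ℝ) = Icc (l i) (u i) :=
    convexHull_eq_Icc_of_isLeast_of_isGreatest
      ⟨hSl i, fun r hr ↦ (hS i r hr).1⟩ ⟨hSu i, fun r hr ↦ (hS i r hr).2⟩
  have key := convexHull_lifted_grid_eq_convexHull_graph_general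
    (.of_multilinearMap (MultilinearMap.mkPiAlgebra ℝ (Fin n) ℝ)) fun i ↦ (S i : Set ℝ)
  simpa only [hull, graphOn, image, mem_univ_pi, Finset.mem_coe, mem_Icc,
    MultilinearMap.mkPiAlgebra_apply, eq_comm] using key
end
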